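/- arXiv:2007.09403 — 2 statements merged into one kernel-verified Lean document; each statement's English description precedes it below -/
import Mathlib

section
/- Let (A, +, ∘) be a strongly nilpotent ℚ-brace. Then for all a, b ∈ A there exists an element c ∈ A such that for every ℚ-linear functional φ: A → ℚ, the real sequence n ↦ φ( 2^n · ( ((1/2^n) · a) * b ) ) converges to φ(c) as n → ∞. -/
/-!
The functions `ℚ → A` carry the pointwise operations of `A`. Fix `a`, `b` and consider the functions
obtained from `x t = t • a` and `y t = t • b` by sums, differences and `*`, filtered by weight, i.e.
by the number of factors `x`, `y`; strong nilpotency kills everything of large weight. On the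
associated graded object `*` is biadditive (`Word.star_add_sub`), because `u + u' = u ∘ u''` with
`u'' ≡ u'` modulo higher weight and `(u ∘ u'') * v = u * v + u'' * v + u * (u'' * v)`. Hence the
substitution `t ↦ 2 t`, which doubles `x` and `y`, acts as multiplication by `2 ^ k` in weight `k`
modulo weight `k + 1` (`Word.doubling`).

Solving this triangular system downwards from the weight where everything vanishes shows that a
function of weight `k` agrees on the points `t = 2 ^ (-N)` with a polynomial divisible by `t ^ k`
(`Word.exists_poly`). For `x * y`, of weight 2, this and linearity of `*` in the second argument
give `t • ((t • a) * b) = t ^ 2 • ∑ t ^ l • p l`, so that `t⁻¹ • ((t • a) * b) = ∑ t ^ l • p l`,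
which tends to `c = p 0`.
-/

open Filter Topology

/-- A left brace: an abelian group `(A, +)` together with a group operation `∘`
satisfying `a ∘ (b + c) + a = a ∘ b + a ∘ c`. -/
structure LeftBrace (A : Type*) [AddCommGroup A] where
  circ : A → A → A
  one : A
  inv : A → A
  circ_assoc : ∀ a b c : A, circ (circ a b) c = circ a (circ b c)
  one_circ : ∀ a : A, circ one a = a
  circ_one : ∀ a : A, circ a one = a
  inv_circ : ∀ a : A, circ (inv a) a = one
  left_dist : ∀ a b c : A, circ a (b + c) + a = circ a b + circ a c

/-- `a * b = a ∘ b - a - b`. -/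
def LeftBrace.star {A : Type*} [AddCommGroup A] (B : LeftBrace A) (a b : A) : A :=
  B.circ a b - a - b

/-- The strong radical chain: `strongChain B m` is `A^[m+1]`; `A^[1] = A` and for
`i > 1`, `A^[i]` is the additive subgroup generated by all `a * b` with
`a ∈ A^[j]`, `b ∈ A^[i-j]`, `0 < j < i`. (Inside the binder `j ≤ m` we have
`min j m = j`, so the generating set below is exactly the intended one.) -/
def LeftBrace.strongChain {A : Type*} [AddCommGroup A] (B : LeftBrace A) : ℕ → AddSubgroup A
  | 0 => ⊤
  | (m+1) => AddSubgroup.closure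
      {x : A | ∃ j ≤ m, ∃ u ∈ LeftBrace.strongChain B (min j m),
        ∃ v ∈ LeftBrace.strongChain B (m - j), x = B.star u v}
termination_by n => n
decreasing_by
  · exact Nat.lt_succ_of_le (Nat.min_le_right j m)
  · exact Nat.lt_succ_of_le (Nat.sub_le m j)

/-- A brace is strongly nilpotent if `A^[n] = 0` for some `n`. -/
def LeftBrace.StronglyNilpotent {A : Type*} [AddCommGroup A] (B : LeftBrace A) : Prop :=
  ∃ n : ℕ, B.strongChain n = ⊥

/-- A ℚ-brace: the additive group is a ℚ-vector space and `a * (e • b) = e • (a * b)`. -/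
def LeftBrace.IsQBrace {A : Type*} [AddCommGroup A] [Module ℚ A] (B : LeftBrace A) : Prop :=
  ∀ (e : ℚ) (a b : A), B.star a (e • b) = e • B.star a b

namespace LeftBrace

variable {A : Type*} [AddCommGroup A] (B : LeftBrace A)

/-! ### Identities for `*` and the strong radical chain -/

lemma circ_eq (a b : A) : B.circ a b = a + b + B.star a b := by
  unfold star; abel

lemma star_add (a b c : A) : B.star a (b + c) = B.star a b + B.star a c := by
  have h := B.left_dist a b c
  rw [← eq_sub_iff_add_eq] at h
  unfold star
  rw [h]; abel

lemma star_zero (a : A) : B.star a 0 = 0 := by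
  have h := B.star_add a 0 0
  simpa using h

lemma one_eq_zero : B.one = 0 := by
  have h := B.circ_eq B.one 0
  rw [B.one_circ, B.star_zero] at h
  simpa using h.symm

lemma zero_star (b : A) : B.star 0 b = 0 := by
  have h := B.one_circ b
  rw [B.one_eq_zero] at h
  simp [star, h]

lemma star_nsmul (m : ℕ) (a b : A) : B.star a (m • b) = m • B.star a b := by
  induction m with
  | zero => simp [B.star_zero]
  | succ m ih => rw [succ_nsmul, succ_nsmul, B.star_add, ih]

lemma circ_star (a b c : A) :
    B.star (B.circ a b) c = B.star a c + B.star b c + B.star a (B.star b c) := by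
  have h := B.circ_assoc a b c
  rw [B.circ_eq (B.circ a b) c, B.circ_eq a (B.circ b c), B.circ_eq b c, B.star_add, B.star_add,
    B.circ_eq a b] at h
  rw [B.circ_eq a b]
  rw [← sub_eq_zero] at h ⊢
  rw [← h]; abel

/-- If `w = w' + a * w'` then `a + w = a ∘ w'`, which expands `(a + w) * c`. -/
lemma add_star {a w w' : A} (h : w' + B.star a w' = w) (c : A) :
    B.star (a + w) c = B.star a c + B.star w' c + B.star a (B.star w' c) := by
  rw [← B.circ_star, B.circ_eq a w', ← h, add_assoc]

lemma star_mem_strongChain {i j : ℕ} {u v : A} (hu : u ∈ B.strongChain i)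
    (hv : v ∈ B.strongChain j) : B.star u v ∈ B.strongChain (i + j + 1) := by
  rw [strongChain]
  refine AddSubgroup.subset_closure ⟨i, by omega, u, ?_, v, ?_, rfl⟩
  · rwa [min_eq_left (by omega)]
  · rwa [Nat.add_sub_cancel_left]

lemma strongChain_succ_le (k : ℕ) : B.strongChain (k + 1) ≤ B.strongChain k := by
  induction k using Nat.strong_induction_on with
  | _ k ih =>
    cases k with
    | zero => rw [strongChain.eq_1]; exact le_top
    | succ k =>
      rw [strongChain.eq_2 B (k + 1), AddSubgroup.closure_le]
      rintro _ ⟨j, hj, u, hu, v, hv, rfl⟩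
      rw [min_eq_left hj] at hu
      cases j with
      | zero =>
        have := B.star_mem_strongChain hu (ih k (by omega) hv)
        rwa [Nat.zero_add] at this
      | succ j =>
        have := B.star_mem_strongChain (ih j (by omega) hu) hv
        rwa [show j + (k + 1 - (j + 1)) + 1 = k + 1 by omega] at this

lemma strongChain_antitone : Antitone B.strongChain :=
  antitone_nat_of_succ_le B.strongChain_succ_le

variable [Module ℚ A]

/-! ### Weight-filtered functions `ℚ → A` -/

/-- `B.Word a b k f` says that `f : ℚ → A` is a sum of `*`-expressions in the functions `t ↦ t • a`
and `t ↦ t • b` of weight at least `k + 1`. The shift by one matches `strongChain`. -/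
inductive Word (a b : A) : ℕ → (ℚ → A) → Prop
  | left : Word a b 0 (fun t => t • a)
  | right : Word a b 0 (fun t => t • b)
  | zero (k : ℕ) : Word a b k (fun _ => 0)
  | add {k : ℕ} {u v : ℚ → A} : Word a b k u → Word a b k v → Word a b k (fun t => u t + v t)
  | neg {k : ℕ} {u : ℚ → A} : Word a b k u → Word a b k (fun t => -u t)
  | star {i j : ℕ} {u v : ℚ → A} : Word a b i u → Word a b j v →
      Word a b (i + j + 1) (fun t => B.star (u t) (v t))
  | mono {k : ℕ} {u : ℚ → A} : Word a b (k + 1) u → Word a b k u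

namespace Word

variable {B} {a b : A}

lemma sub {k : ℕ} {u v : ℚ → A} (hu : B.Word a b k u) (hv : B.Word a b k v) :
    B.Word a b k (fun t => u t - v t) := by
  simpa only [sub_eq_add_neg] using hu.add hv.neg

lemma nsmul {k : ℕ} {u : ℚ → A} (hu : B.Word a b k u) (m : ℕ) :
    B.Word a b k (fun t => m • u t) := by
  induction m with
  | zero => simpa only [zero_nsmul] using Word.zero k
  | succ m ih => simpa only [succ_nsmul] using ih.add hu

lemma of_le {k l : ℕ} (h : k ≤ l) {u : ℚ → A} (hu : B.Word a b l u) : B.Word a b k u := by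
  induction l, h using Nat.le_induction with
  | base => exact hu
  | succ l _ ih => exact ih hu.mono

lemma mem_strongChain {k : ℕ} {u : ℚ → A} (hu : B.Word a b k u) (t : ℚ) :
    u t ∈ B.strongChain k := by
  induction hu with
  | left => rw [strongChain]; trivial
  | right => rw [strongChain]; trivial
  | zero k => exact zero_mem _
  | add _ _ h1 h2 => exact add_mem h1 h2
  | neg _ h => exact neg_mem h
  | star _ _ h1 h2 => exact B.star_mem_strongChain h1 h2
  | mono _ h => exact B.strongChain_succ_le _ h

lemma eq_zero {n : ℕ} (hn : B.strongChain n = ⊥) {k : ℕ} (hk : n ≤ k) {u : ℚ → A}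
    (hu : B.Word a b k u) (t : ℚ) : u t = 0 := by
  have := B.strongChain_antitone hk (hu.mem_strongChain t)
  rwa [hn, AddSubgroup.mem_bot] at this

/-- The map `w' ↦ w' + u * w'` is onto in each weight, by nilpotency. -/
lemma exists_add_star_eq {n : ℕ} (hn : B.strongChain n = ⊥) {i : ℕ} {u : ℚ → A}
    (hu : B.Word a b i u) (d : ℕ) : ∀ {j : ℕ}, n ≤ j + d → ∀ {w : ℚ → A}, B.Word a b j w →
      ∃ w', B.Word a b j w' ∧ ∀ t, w' t + B.star (u t) (w' t) = w t := by
  induction d with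
  | zero =>
    intro j hj w hw
    refine ⟨fun _ => 0, Word.zero j, fun t => ?_⟩
    simp [B.star_zero, hw.eq_zero hn hj t]
  | succ d ih =>
    intro j hj w hw
    obtain ⟨z, hz, hzw⟩ := ih (j := j + 1) (by omega)
      (of_le (by omega) (hu.star hw).neg : B.Word a b (j + 1) _)
    refine ⟨_, hw.add hz.mono, fun t => ?_⟩
    have h := hzw t
    rw [eq_neg_iff_add_eq_zero] at h
    rw [B.star_add, ← sub_eq_zero, ← h]; abel

/-- The special case of `star_add_sub` in which `w` has higher weight, so that `w * v` is itself
negligible. -/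
lemma star_add_high {n : ℕ} (hn : B.strongChain n = ⊥) {i j : ℕ} {u w v : ℚ → A}
    (hu : B.Word a b i u) (hw : B.Word a b (i + 1) w) (hv : B.Word a b j v) :
    B.Word a b (i + j + 2) (fun t => B.star (u t + w t) (v t) - B.star (u t) (v t)) := by
  obtain ⟨w', hw', h⟩ := exists_add_star_eq hn hu n (by omega) hw
  have h1 : B.Word a b (i + j + 2) (fun t => B.star (w' t) (v t)) :=
    of_le (by omega) (hw'.star hv)
  have h2 : B.Word a b (i + j + 2) (fun t => B.star (u t) (B.star (w' t) (v t))) :=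
    of_le (by omega) (hu.star (hw'.star hv))
  convert h1.add h2 using 2 with t
  rw [B.add_star (h t)]; abel

/-- `*` is additive in its first argument modulo higher weight. -/
lemma star_add_sub {n : ℕ} (hn : B.strongChain n = ⊥) {i j : ℕ} {u w v : ℚ → A}
    (hu : B.Word a b i u) (hw : B.Word a b i w) (hv : B.Word a b j v) :
    B.Word a b (i + j + 2)
      (fun t => B.star (u t + w t) (v t) - B.star (u t) (v t) - B.star (w t) (v t)) := by
  obtain ⟨w', hw', h⟩ := exists_add_star_eq hn hu n (by omega) hw
  -- `w'` differs from `w` by `u * w'`, which has higher weight.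
  have h1 := star_add_high hn hw' (of_le (by omega) (hu.star hw') : B.Word a b (i + 1) _) hv
  have h2 : B.Word a b (i + j + 2) (fun t => B.star (u t) (B.star (w' t) (v t))) :=
    of_le (by omega) (hu.star (hw'.star hv))
  convert h2.sub h1 using 2 with t
  rw [B.add_star (h t), h t]; abel

lemma star_nsmul_sub {n : ℕ} (hn : B.strongChain n = ⊥) {i j : ℕ} {u v : ℚ → A}
    (hu : B.Word a b i u) (hv : B.Word a b j v) (m : ℕ) :
    B.Word a b (i + j + 2) (fun t => B.star (m • u t) (v t) - m • B.star (u t) (v t)) := by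
  induction m with
  | zero => simpa [B.zero_star] using Word.zero (i + j + 2)
  | succ m ih =>
    convert ih.add (star_add_sub hn (hu.nsmul m) hu hv) using 2 with t
    rw [succ_nsmul, succ_nsmul]; abel

/-! ### Doubling the argument -/

/-- The substitution `t ↦ 2 t` acts as `2 ^ k` on weight `k`, modulo weight `k + 1`. -/
lemma doubling {n : ℕ} (hn : B.strongChain n = ⊥) {k : ℕ} {u : ℚ → A} (hu : B.Word a b k u) :
    B.Word a b (k + 1) (fun t => u (2 * t) - 2 ^ (k + 1) • u t) := by
  induction hu with
  | left =>
    convert Word.zero 1 using 2 with t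
    dsimp only
    rw [mul_smul, two_smul, zero_add, pow_one, two_nsmul, sub_self]
  | right =>
    convert Word.zero 1 using 2 with t
    dsimp only
    rw [mul_smul, two_smul, zero_add, pow_one, two_nsmul, sub_self]
  | zero k => simpa using Word.zero (k + 1)
  | add _ _ h1 h2 =>
    convert h1.add h2 using 2 with t
    rw [nsmul_add, add_sub_add_comm]
  | neg _ h =>
    convert h.neg using 2 with t
    rw [smul_neg, neg_sub, sub_neg_eq_add, neg_add_eq_sub]
  | @star i j u v hu hv h1 h2 =>
    have hTu : B.Word a b i (fun t => u (2 * t)) := by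
      convert h1.mono.add (hu.nsmul (2 ^ (i + 1))) using 2 with t
      abel
    have e1 : B.Word a b (i + j + 2) _ := of_le (by omega) (hTu.star h2)
    have e2 := star_add_high hn (hu.nsmul (2 ^ (i + 1))) h1 hv
    have e3 := star_nsmul_sub hn hu hv (2 ^ (i + 1))
    convert e1.add ((e2.add e3).nsmul (2 ^ (j + 1))) using 2 with t
    have h : B.star (u (2 * t)) (v (2 * t)) =
        B.star (u (2 * t)) (v (2 * t) - 2 ^ (j + 1) • v t) +
          2 ^ (j + 1) • B.star (u (2 * t)) (v t) := by
      rw [← B.star_nsmul, ← B.star_add, sub_add_cancel]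
    dsimp only
    rw [h, add_sub_cancel, sub_add_sub_cancel, nsmul_sub, ← mul_nsmul,
      show 2 ^ (i + j + 1 + 1) = 2 ^ (i + 1) * 2 ^ (j + 1) by ring, add_sub_assoc]
  | @mono k u hu h =>
    convert h.mono.add (hu.nsmul (2 ^ (k + 1))) using 2 with t
    rw [pow_succ 2 (k + 1), mul_two, add_nsmul, sub_add_eq_sub_sub, sub_add_cancel]

/-- A function of weight `k + 1` agrees on the points `2 ^ (-N)` with a polynomial in `t` divisible
by `t ^ (k + 1)`. -/
lemma exists_poly {n : ℕ} (hn : B.strongChain n = ⊥) (d : ℕ) :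
    ∀ {k : ℕ}, n ≤ k + d → ∀ {f : ℚ → A}, B.Word a b k f →
      ∃ (M : ℕ) (p : ℕ → A), ∀ N : ℕ, f ((1 / 2) ^ N) =
        (((1 : ℚ) / 2) ^ N) ^ (k + 1) • ∑ l ∈ Finset.range (M + 1), (((1 : ℚ) / 2) ^ N) ^ l • p l := by
  induction d with
  | zero =>
    intro k hk f hf
    exact ⟨0, fun _ => 0, fun N => by simp [hf.eq_zero hn hk]⟩
  | succ d ih =>
    intro k hk f hf
    obtain ⟨M, h, hh⟩ := ih (k := k + 1) (by omega) (hf.doubling hn)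
    -- `q` solves `q (2 t) - 2 ^ (k + 1) q t = t ^ (k + 2) ∑ t ^ l h l` coefficientwise.
    set p : ℕ → A := fun l => ((2 : ℚ) ^ (k + 2 + l) - 2 ^ (k + 1))⁻¹ • h l with hp
    set q : ℚ → A := fun t => t ^ (k + 2) • ∑ l ∈ Finset.range (M + 1), t ^ l • p l with hq
    have hqT (t : ℚ) : q (2 * t) - (2 : ℚ) ^ (k + 1) • q t =
        t ^ (k + 2) • ∑ l ∈ Finset.range (M + 1), t ^ l • h l := by
      simp only [hq, Finset.smul_sum, ← Finset.sum_sub_distrib]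
      refine Finset.sum_congr rfl fun l _ => ?_
      have hne : (2 : ℚ) ^ (k + 2 + l) - 2 ^ (k + 1) ≠ 0 :=
        sub_ne_zero.2 (pow_lt_pow_right₀ one_lt_two (by omega)).ne'
      simp only [hp, smul_smul, ← sub_smul]
      congr 1
      field_simp
      ring
    -- The remainder `f - q` is homogeneous of degree `k + 1` under doubling.
    have hrem (N : ℕ) : f ((1 / 2) ^ N) =
        (((1 : ℚ) / 2) ^ N) ^ (k + 1) • (f 1 - q 1) + q ((1 / 2) ^ N) := by
      induction N with
      | zero => simp
      | succ N ihN =>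
        have h1 := hh (N + 1)
        rw [← hqT, show (2 : ℚ) * (1 / 2) ^ (N + 1) = (1 / 2) ^ N by ring, ihN,
          ← Nat.cast_smul_eq_nsmul ℚ, Nat.cast_pow, Nat.cast_ofNat] at h1
        have h2 : (2 : ℚ) ^ (k + 1) • f ((1 / 2) ^ (N + 1)) = (2 : ℚ) ^ (k + 1) •
            ((((1 : ℚ) / 2) ^ (N + 1)) ^ (k + 1) • (f 1 - q 1) + q ((1 / 2) ^ (N + 1))) := by
          rw [smul_add, smul_smul, ← mul_pow,
            show (2 : ℚ) * (1 / 2) ^ (N + 1) = (1 / 2) ^ N by ring]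
          rw [← sub_eq_zero] at h1 ⊢
          rw [← neg_eq_zero, ← h1]; abel
        exact (smul_right_injective A (pow_ne_zero (k + 1) (two_ne_zero (α := ℚ)))) h2
    refine ⟨M + 1, fun l => Nat.casesOn l (f 1 - q 1) p, fun N => ?_⟩
    rw [hrem, Finset.sum_range_succ', add_comm, smul_add]
    simp only [pow_zero, one_smul, hq]
    congr 1
    simp only [Finset.smul_sum, smul_smul]
    refine Finset.sum_congr rfl fun l _ => ?_
    congr 1
    ring

end Word

end LeftBrace

theorem statement3 {A : Type*} [AddCommGroup A] [Module ℚ A] (B : LeftBrace A)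
    (hQ : B.IsQBrace) (hSN : B.StronglyNilpotent) (a b : A) :
    ∃ c : A, ∀ φ : A →ₗ[ℚ] ℚ,
      Tendsto (fun n : ℕ =>
          ((φ ((2 ^ n : ℚ) • B.star (((1 : ℚ) / 2 ^ n) • a) b) : ℚ) : ℝ))
        atTop (𝓝 ((φ c : ℚ) : ℝ)) := by
  obtain ⟨n, hn⟩ := hSN
  -- `x * y` has weight 2.
  obtain ⟨M, p, hp⟩ := LeftBrace.Word.exists_poly hn n (by omega)
    (LeftBrace.Word.star (B := B) (a := a) (b := b) .left .right)
  refine ⟨p 0, fun φ => ?_⟩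
  have key (N : ℕ) : (2 ^ N : ℚ) • B.star (((1 : ℚ) / 2 ^ N) • a) b =
      ∑ l ∈ Finset.range (M + 1), (((1 : ℚ) / 2) ^ N) ^ l • p l := by
    have h := hp N
    rw [hQ] at h
    have ht : ((1 : ℚ) / 2) ^ N ≠ 0 := by positivity
    apply smul_right_injective A (pow_ne_zero 2 ht)
    simp only
    rw [show 0 + 0 + 1 + 1 = 2 from rfl] at h
    rw [← h, smul_smul, show (1 : ℚ) / 2 ^ N = (1 / 2) ^ N by simp]
    congr 1
    rw [sq, mul_assoc, ← mul_pow]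
    norm_num
  have hcont : Continuous fun s : ℝ => ∑ l ∈ Finset.range (M + 1), s ^ l * ((φ (p l) : ℚ) : ℝ) := by
    fun_prop
  have hlim := (hcont.tendsto 0).comp
    (tendsto_pow_atTop_nhds_zero_of_lt_one (r := (1 / 2 : ℝ)) (by norm_num) (by norm_num))
  rw [Finset.sum_range_succ'] at hlim
  simp only [pow_zero, one_mul, ne_eq, Nat.add_eq_zero_iff, one_ne_zero, and_false,
    not_false_eq_true, zero_pow, zero_mul, Finset.sum_const_zero, zero_add] at hlim
  refine hlim.congr fun N => ?_
  rw [key, map_sum]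
  simp [Function.comp]
end

section
/- Let (A, +, ·) be a nilpotent pre-Lie algebra over a field F of characteristic zero, let Ω: A → A be the inverse of the map W, and define a∘b = a + e^{L_{Ω(a)}}(b). Then (A, ∘) is a group with identity element 0. -/
/-!
Let `A` act on its right unitization `A × F` by left multiplications, with `L_a 1 = a`. The pre-Lie
identity makes `a ↦ L_a` a Lie algebra representation, nilpotency of `A` makes every product of `n`
operators `L_a` vanish, and `e^{L_x} 1 = 1 + W(x)` (`texp_rep_one`). Suppose that for all `x`, `y`
there is `z` with `e^{L_z} = e^{L_x} e^{L_y}`. Evaluating at `1` gives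
`W(z) = W(x) + e^{L_x}(W(y)) = W(x) ∘ W(y)`, hence `e^{L_{Ω(a ∘ b)}} = e^{L_{Ω(a)}} e^{L_{Ω(b)}}`,
which is associativity of `∘`. Right inverses exist because `e^{L_x}` is unipotent, hence
surjective, and a monoid with right inverses is a group.

The existence of `z` is the qualitative Baker-Campbell-Hausdorff theorem (`exists_texp_mul`): if `g`
is a Lie subalgebra of an associative algebra `E` over a field of characteristic zero and `g ^ n = 0`,
then the exponentials of `g` are closed under multiplication. It is proved in `E[X]` by solving
`e^Z = e^{xX} e^{yX}` modulo increasing powers of `X`, with `Z` in `g[X]` without constant term. The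
logarithmic derivative of `e^Z` is `((e^{ad Z} - 1) / ad Z)(Z')`, which lies in `g[X]`
(`logDeriv_texp`), and so does that of `e^{xX} e^{yX}` (`logDeriv_mul`). Given a solution modulo
`X ^ m`, the difference of the two logarithmic derivatives has leading term `m r X ^ (m - 1)`, where
`r X ^ m` is the leading term of the error; hence `r ∈ g`, and `Z + r X ^ m` is a solution modulo
`X ^ (m + 1)` (`bch_step`). Throughout, the coefficient of `X ^ d` stays in `g ^ d`, so that a
solution modulo `X ^ n` is an exact solution, which may be evaluated at `X = 1`.
-/

open Filter Topology

/-- A pre-Lie algebra over a field `F`: an `F`-vector space with a bilinear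
product satisfying `(x·y)·z − x·(y·z) = (y·x)·z − y·(x·z)`. -/
structure PreLieAlg (F : Type*) (A : Type*) [Field F] [AddCommGroup A] [Module F A] where
  mul : A → A → A
  mul_add : ∀ a b c : A, mul a (b + c) = mul a b + mul a c
  add_mul : ∀ a b c : A, mul (a + b) c = mul a c + mul b c
  smul_mul : ∀ (e : F) (a b : A), mul (e • a) b = e • mul a b
  mul_smul : ∀ (e : F) (a b : A), mul a (e • b) = e • mul a b
  pre_lie : ∀ a b c : A,
    mul (mul a b) c - mul a (mul b c) = mul (mul b a) c - mul b (mul a c)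

/-- `P.IsProd x n` : `x` is a product of `n` elements of `A`, with any
distribution of brackets. -/
inductive PreLieAlg.IsProd {F A : Type*} [Field F] [AddCommGroup A] [Module F A]
    (P : PreLieAlg F A) : A → ℕ → Prop
  | single (a : A) : PreLieAlg.IsProd P a 1
  | node {u v : A} {n m : ℕ} : PreLieAlg.IsProd P u n → PreLieAlg.IsProd P v m →
      PreLieAlg.IsProd P (P.mul u v) (n + m)

/-- `A` is nilpotent of index `n` (`0 < n`): every product of `n` elements
(with any distribution of brackets) is zero. -/
def PreLieAlg.IsNilpotentOf {F A : Type*} [Field F] [AddCommGroup A] [Module F A]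
    (P : PreLieAlg F A) (n : ℕ) : Prop :=
  0 < n ∧ ∀ x : A, P.IsProd x n → x = 0

/-- `e^{L_x}(b) = Σ_{k ≥ 0} (1/k!) • L_x^k(b)`; under nilpotency of index `n`
all terms with `k ≥ n - 1` vanish, so the series equals this truncated sum. -/
def PreLieAlg.expL {F A : Type*} [Field F] [AddCommGroup A] [Module F A]
    (P : PreLieAlg F A) (n : ℕ) (x b : A) : A :=
  ∑ k ∈ Finset.range n, ((Nat.factorial k : F))⁻¹ • (P.mul x)^[k] b

/-- `W(a) = Σ_{k ≥ 1} (1/k!) • L_a^{k-1}(a)`; under nilpotency of index `n`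
all terms with `k ≥ n` vanish, so the series equals this truncated sum. -/
def PreLieAlg.W {F A : Type*} [Field F] [AddCommGroup A] [Module F A]
    (P : PreLieAlg F A) (n : ℕ) (a : A) : A :=
  ∑ k ∈ Finset.range n, ((Nat.factorial (k + 1) : F))⁻¹ • (P.mul a)^[k] a

/-- The group-of-flows multiplication `a ∘ b = a + e^{L_{Ω(a)}}(b)`. -/
def PreLieAlg.flow {F A : Type*} [Field F] [AddCommGroup A] [Module F A]
    (P : PreLieAlg F A) (n : ℕ) (Ω : A → A) (a b : A) : A :=
  a + P.expL n (Ω a) b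

/-- `a * b = a ∘ b - a - b` for the group-of-flows multiplication. -/
def PreLieAlg.flowStar {F A : Type*} [Field F] [AddCommGroup A] [Module F A]
    (P : PreLieAlg F A) (n : ℕ) (Ω : A → A) (a b : A) : A :=
  P.flow n Ω a b - a - b

namespace FlowGroup

open Polynomial

/-! ### Derivations and the exponential series -/

section Derivation

variable {F R : Type*} [Field F] [Ring R] [Algebra F R]

/-- The inner derivation `Y ↦ Z * Y - Y * Z`. -/
def adj (F : Type*) {R : Type*} [Field F] [Ring R] [Algebra F R] (Z : R) : R →ₗ[F] R :=
  LinearMap.mulLeft F Z - LinearMap.mulRight F Z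

/-- The divided power `Z ^ k / k!`. -/
def divPow (F : Type*) {R : Type*} [Field F] [Ring R] [Algebra F R] (Z : R) (k : ℕ) : R :=
  ((Nat.factorial k : F))⁻¹ • Z ^ k

/-- The exponential series of `Z` truncated after `n` terms. -/
def texp (F : Type*) {R : Type*} [Field F] [Ring R] [Algebra F R] (n : ℕ) (Z : R) : R :=
  ∑ k ∈ Finset.range n, divPow F Z k

/-- The `k`-th term `ad_Z^k(Y) / (k+1)!` of the series `((e^{ad Z} - 1) / ad Z)(Y)`. -/
def adTerm (F : Type*) {R : Type*} [Field F] [Ring R] [Algebra F R] (Z Y : R) (k : ℕ) : R :=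
  ((Nat.factorial (k + 1) : F))⁻¹ • ((adj F Z)^[k] Y)

lemma adj_apply (Z Y : R) : adj F Z Y = Z * Y - Y * Z := rfl

lemma divPow_zero (Z : R) : divPow F Z 0 = 1 := by simp [divPow]

lemma adTerm_zero (Z Y : R) : adTerm F Z Y 0 = Y := by simp [adTerm]

variable [CharZero F]

lemma divPow_succ (Z : R) (k : ℕ) : ((k : F) + 1) • divPow F Z (k + 1) = Z * divPow F Z k := by
  have h : (k : F) + 1 ≠ 0 := by exact_mod_cast Nat.succ_ne_zero k
  rw [divPow, divPow, mul_smul_comm, ← pow_succ', smul_smul, Nat.factorial_succ]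
  congr 1
  push_cast
  rw [mul_inv, ← mul_assoc, mul_inv_cancel₀ h, one_mul]

lemma adTerm_succ (Z Y : R) (k : ℕ) :
    Z * adTerm F Z Y k = adTerm F Z Y k * Z + ((k : F) + 2) • adTerm F Z Y (k + 1) := by
  have h : (k : F) + 2 ≠ 0 := by exact_mod_cast Nat.succ_ne_zero (k + 1)
  have e : ((k : F) + 2) * ((Nat.factorial (k + 1 + 1) : F))⁻¹
      = ((Nat.factorial (k + 1) : F))⁻¹ := by
    rw [Nat.factorial_succ (k + 1)]
    push_cast
    rw [show (k : F) + 1 + 1 = k + 2 by ring, mul_inv, ← mul_assoc, mul_inv_cancel₀ h, one_mul]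
  rw [adTerm, adTerm, smul_smul, e, Function.iterate_succ_apply', adj_apply, mul_smul_comm,
    smul_mul_assoc, smul_sub]
  abel

/-- Degree by degree, this is the formula `D(e^Z) = ((e^{ad Z} - 1) / ad Z)(D Z) * e^Z`. -/
lemma derivation_divPow (D : R →ₗ[F] R) (hD : ∀ p q, D (p * q) = D p * q + p * D q) (Z : R)
    (k : ℕ) : D (divPow F Z (k + 1)) =
      ∑ x ∈ Finset.HasAntidiagonal.antidiagonal k, adTerm F Z (D Z) x.1 * divPow F Z x.2 := by
  induction k with
  | zero =>
    simp [divPow, adTerm]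
  | succ k ih =>
    have h : ((k + 1 : ℕ) : F) + 1 ≠ 0 := by exact_mod_cast Nat.succ_ne_zero (k + 1)
    refine smul_right_injective R h ?_
    simp only
    rw [← map_smul, divPow_succ, hD, ih]
    -- split the factor `k + 2 = (i + 1) + j` on the term of bidegree `(i, j)`
    have e : ((k + 1 : ℕ) + 1 : F) •
        ∑ x ∈ Finset.HasAntidiagonal.antidiagonal (k + 1), adTerm F Z (D Z) x.1 * divPow F Z x.2 =
        (∑ x ∈ Finset.HasAntidiagonal.antidiagonal (k + 1),
          ((x.1 : F) + 1) • (adTerm F Z (D Z) x.1 * divPow F Z x.2)) +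
        ∑ x ∈ Finset.HasAntidiagonal.antidiagonal (k + 1),
          (x.2 : F) • (adTerm F Z (D Z) x.1 * divPow F Z x.2) := by
      rw [Finset.smul_sum, ← Finset.sum_add_distrib]
      refine Finset.sum_congr rfl fun x hx => ?_
      rw [← add_smul, ← Finset.HasAntidiagonal.mem_antidiagonal.1 hx]
      congr 1
      push_cast
      ring
    rw [e, Finset.Nat.sum_antidiagonal_succ, Finset.Nat.sum_antidiagonal_succ', Finset.mul_sum]
    simp only [adTerm_zero, Nat.cast_zero, zero_add, one_smul, zero_smul]
    rw [add_assoc, ← Finset.sum_add_distrib]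
    congr 1
    refine Finset.sum_congr rfl fun x _ => ?_
    rw [← mul_assoc, adTerm_succ, add_mul, mul_assoc, ← divPow_succ (F := F), mul_smul_comm,
      smul_mul_assoc, add_comm]
    push_cast
    congr 2
    ring

end Derivation

/-! ### The Baker-Campbell-Hausdorff theorem in a polynomial ring -/

section Polynomials

variable {F E : Type*} [Field F] [Ring E] [Algebra F E]

/-- The polynomials divisible by `X ^ m`. -/
def ord (F E : Type*) [Field F] [Ring E] [Algebra F E] (m : ℕ) : Submodule F E[X] where
  carrier := {p | ∀ d < m, p.coeff d = 0}
  zero_mem' := by simp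
  add_mem' := by
    intro p q hp hq d hd
    simp [hp d hd, hq d hd]
  smul_mem' := by
    intro c p hp d hd
    simp [hp d hd]

/-- The polynomials all of whose coefficients lie in `g`. -/
def coeffsIn (g : Submodule F E) : Submodule F E[X] where
  carrier := {p | ∀ d, p.coeff d ∈ g}
  zero_mem' := by simp
  add_mem' := by
    intro p q hp hq d
    simpa using g.add_mem (hp d) (hq d)
  smul_mem' := by
    intro c p hp d
    simpa using g.smul_mem c (hp d)

/-- The Rees algebra of the filtration of `E` by the powers of `g`: the coefficient of `X ^ d`
lies in `g ^ d`. -/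
def rees (g : Submodule F E) : Subalgebra F E[X] where
  carrier := {p | ∀ d, p.coeff d ∈ g ^ d}
  add_mem' := by
    intro p q hp hq d
    simpa using (g ^ d).add_mem (hp d) (hq d)
  mul_mem' := by
    intro p q hp hq d
    rw [coeff_mul]
    refine Submodule.sum_mem _ fun x hx => ?_
    rw [← Finset.HasAntidiagonal.mem_antidiagonal.1 hx, pow_add]
    exact Submodule.mul_mem_mul (hp _) (hq _)
  algebraMap_mem' := by
    intro c d
    rw [Polynomial.algebraMap_apply, coeff_C]
    split_ifs with h
    · subst h
      rw [pow_zero]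
      exact Submodule.algebraMap_mem c
    · exact zero_mem _

lemma mem_ord {m : ℕ} {p : E[X]} : p ∈ ord F E m ↔ ∀ d < m, p.coeff d = 0 := Iff.rfl

lemma mem_coeffsIn {g : Submodule F E} {p : E[X]} : p ∈ coeffsIn g ↔ ∀ d, p.coeff d ∈ g := Iff.rfl

lemma mem_rees {g : Submodule F E} {p : E[X]} : p ∈ rees g ↔ ∀ d, p.coeff d ∈ g ^ d := Iff.rfl

lemma ord_zero (p : E[X]) : p ∈ ord F E 0 := fun _ h => absurd h (Nat.not_lt_zero _)

lemma ord_mono {i j : ℕ} (h : i ≤ j) {p : E[X]} (hp : p ∈ ord F E j) : p ∈ ord F E i :=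
  fun d hd => hp d (hd.trans_le h)

lemma ord_mul {i j : ℕ} {p q : E[X]} (hp : p ∈ ord F E i) (hq : q ∈ ord F E j) :
    p * q ∈ ord F E (i + j) := by
  intro d hd
  rw [coeff_mul]
  refine Finset.sum_eq_zero fun x hx => ?_
  have hx' := Finset.HasAntidiagonal.mem_antidiagonal.1 hx
  by_cases h : x.1 < i
  · rw [hp _ h, zero_mul]
  · rw [hq _ (by omega), mul_zero]

lemma ord_mul_left {j : ℕ} (p : E[X]) {q : E[X]} (hq : q ∈ ord F E j) : p * q ∈ ord F E j := by
  simpa using ord_mul (ord_zero (F := F) p) hq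

lemma ord_mul_right {j : ℕ} {p : E[X]} (q : E[X]) (hp : p ∈ ord F E j) : p * q ∈ ord F E j := by
  simpa using ord_mul hp (ord_zero (F := F) q)

lemma ord_pow {Z : E[X]} (hZ : Z ∈ ord F E 1) (k : ℕ) : Z ^ k ∈ ord F E k := by
  induction k with
  | zero => exact ord_zero _
  | succ k ih => rw [pow_succ]; exact ord_mul ih hZ

lemma ord_divPow {Z : E[X]} (hZ : Z ∈ ord F E 1) (k : ℕ) : divPow F Z k ∈ ord F E k :=
  Submodule.smul_mem _ _ (ord_pow hZ k)

lemma ord_adTerm {Z : E[X]} (hZ : Z ∈ ord F E 1) (Y : E[X]) (k : ℕ) :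
    adTerm F Z Y k ∈ ord F E k := by
  refine Submodule.smul_mem _ _ ?_
  induction k with
  | zero => exact ord_zero _
  | succ k ih =>
    rw [Function.iterate_succ_apply', adj_apply]
    exact Submodule.sub_mem _ (by simpa [add_comm] using ord_mul hZ ih) (ord_mul ih hZ)

lemma adj_coeffsIn {g : Submodule F E} (hg : ∀ x ∈ g, ∀ y ∈ g, x * y - y * x ∈ g)
    {p q : E[X]} (hp : p ∈ coeffsIn g) (hq : q ∈ coeffsIn g) : adj F p q ∈ coeffsIn g := by
  intro d
  rw [adj_apply, coeff_sub, coeff_mul, coeff_mul,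
    ← Finset.Nat.sum_antidiagonal_swap (f := fun x => q.coeff x.1 * p.coeff x.2),
    ← Finset.sum_sub_distrib]
  exact Submodule.sum_mem _ fun x _ => hg _ (hp _) _ (hq _)

lemma adTerm_coeffsIn {g : Submodule F E} (hg : ∀ x ∈ g, ∀ y ∈ g, x * y - y * x ∈ g)
    {p q : E[X]} (hp : p ∈ coeffsIn g) (hq : q ∈ coeffsIn g) (k : ℕ) :
    adTerm F p q k ∈ coeffsIn g := by
  refine Submodule.smul_mem _ _ ?_
  induction k with
  | zero => exact hq
  | succ k ih =>
    rw [Function.iterate_succ_apply']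
    exact adj_coeffsIn hg hp ih

/-- A double sum over a square and the sum over the triangle below its antidiagonal agree modulo
the terms on or above the antidiagonal. -/
lemma square_sub_triangle {M : Type*} [AddCommGroup M] [Module F M] (J : Submodule F M)
    (f : ℕ → ℕ → M) (N : ℕ) (hf : ∀ i j, N ≤ i + j → f i j ∈ J) :
    (∑ k ∈ Finset.range N, ∑ x ∈ Finset.HasAntidiagonal.antidiagonal k, f x.1 x.2) -
      ∑ i ∈ Finset.range (N + 1), ∑ j ∈ Finset.range (N + 1), f i j ∈ J := by
  simp_rw [Finset.Nat.sum_antidiagonal_eq_sum_range_succ f]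
  rw [Finset.sum_range_diag_flip, Finset.sum_range_succ, ← sub_sub, ← Finset.sum_sub_distrib]
  refine J.sub_mem (J.sum_mem fun i hi => ?_) (J.sum_mem fun j _ => hf _ _ (by omega))
  rw [← neg_sub, ← Finset.sum_Ico_eq_sub _ (by omega)]
  refine J.neg_mem (J.sum_mem fun j hj => hf _ _ ?_)
  have := (Finset.mem_Ico.1 hj).1
  omega

variable [CharZero F]

/-- The logarithmic derivative of the truncated exponential of a polynomial with coefficients in
the Lie algebra `g` and zero constant term is, up to high order, again in `g[X]`. -/
lemma logDeriv_texp {g : Submodule F E} (hg : ∀ x ∈ g, ∀ y ∈ g, x * y - y * x ∈ g)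
    (D : E[X] →ₗ[F] E[X]) (hD : ∀ p q, D (p * q) = D p * q + p * D q)
    (hDg : ∀ p ∈ coeffsIn g, D p ∈ coeffsIn g) (N : ℕ) {Z : E[X]} (hZ : Z ∈ ord F E 1)
    (hZg : Z ∈ coeffsIn g) :
    ∃ w ∈ coeffsIn g, D (texp F (N + 1) Z) - w * texp F (N + 1) Z ∈ ord F E N := by
  refine ⟨∑ i ∈ Finset.range (N + 1), adTerm F Z (D Z) i,
    Submodule.sum_mem _ fun i _ => adTerm_coeffsIn hg hZg (hDg _ hZg) i, ?_⟩
  have h1 : D 1 = 0 := by simpa using hD 1 1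
  have h2 : D (texp F (N + 1) Z) = ∑ k ∈ Finset.range N, ∑ x ∈ Finset.HasAntidiagonal.antidiagonal k,
      adTerm F Z (D Z) x.1 * divPow F Z x.2 := by
    rw [texp, map_sum, Finset.sum_range_succ', divPow_zero, h1, add_zero]
    exact Finset.sum_congr rfl fun k _ => derivation_divPow D hD Z k
  rw [h2, texp, Finset.sum_mul_sum]
  exact square_sub_triangle _ (fun i j => adTerm F Z (D Z) i * divPow F Z j) N
    fun i j hij => ord_mono hij (ord_mul (ord_adTerm hZ _ i) (ord_divPow hZ j))

lemma texp_sub_one {F E : Type*} [Field F] [Ring E] [Algebra F E] {Z : E[X]}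
    (hZ : Z ∈ ord F E 1) (N : ℕ) : texp F (N + 1) Z - 1 ∈ ord F E 1 := by
  rw [texp, Finset.sum_range_succ', divPow_zero, add_sub_cancel_right]
  exact Submodule.sum_mem _ fun k _ => ord_mono (by omega) (ord_divPow hZ (k + 1))

/-- Multiplication by a polynomial with constant term `1` reflects divisibility by `X ^ m`. -/
lemma ord_of_mul {F E : Type*} [Field F] [Ring E] [Algebra F E] {m : ℕ} {p u : E[X]}
    (hu : u - 1 ∈ ord F E 1) (h : p * u ∈ ord F E m) : p ∈ ord F E m := by
  have key : ∀ j ≤ m, p ∈ ord F E j := by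
    intro j
    induction j with
    | zero => exact fun _ => ord_zero _
    | succ j ih =>
      intro hj
      have h1 := Submodule.sub_mem _ (ord_mono hj h) (ord_mul (ih (by omega)) hu)
      rwa [mul_sub, mul_one, sub_sub_cancel] at h1
  exact key m le_rfl

lemma texp_rees {F E : Type*} [Field F] [Ring E] [Algebra F E] {g : Submodule F E} {Z : E[X]}
    (hZ : Z ∈ rees g) (n : ℕ) : texp F n Z ∈ rees g :=
  Subalgebra.sum_mem _ fun _ _ => Subalgebra.smul_mem _ (Subalgebra.pow_mem _ hZ _) _

/-- To leading order, perturbing `Z` by a term of order `m` perturbs `e^Z` by the same term. -/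
lemma texp_add {F E : Type*} [Field F] [Ring E] [Algebra F E] {Z h : E[X]} {m N : ℕ}
    (hm : 1 ≤ m) (hN : 1 ≤ N) (hZ : Z ∈ ord F E 1) (hh : h ∈ ord F E m) :
    texp F (N + 1) (Z + h) - texp F (N + 1) Z - h ∈ ord F E (m + 1) := by
  have hZh : Z + h ∈ ord F E 1 := Submodule.add_mem _ hZ (ord_mono hm hh)
  have rec1 : ∀ k, (Z + h) ^ (k + 1) - Z ^ (k + 1)
      = (Z + h) ^ k * h + ((Z + h) ^ k - Z ^ k) * Z := by
    intro k
    rw [pow_succ, pow_succ]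
    noncomm_ring
  have h1 : ∀ k, (Z + h) ^ k - Z ^ k ∈ ord F E m := by
    intro k
    induction k with
    | zero => simp
    | succ k ih =>
      rw [rec1]
      exact Submodule.add_mem _ (ord_mul_left _ hh) (ord_mul_right _ ih)
  have h2 : ∀ k, (Z + h) ^ (k + 2) - Z ^ (k + 2) ∈ ord F E (m + 1) := by
    intro k
    rw [rec1]
    refine Submodule.add_mem _ (ord_mono ?_ (ord_mul (ord_pow hZh (k + 1)) hh)) (ord_mul (h1 _) hZ)
    omega
  obtain ⟨M, rfl⟩ : ∃ M, N = M + 1 := ⟨N - 1, by omega⟩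
  have e : texp F (M + 1 + 1) (Z + h) - texp F (M + 1 + 1) Z - h = ∑ k ∈ Finset.range M,
      ((Nat.factorial (k + 2) : F))⁻¹ • ((Z + h) ^ (k + 2) - Z ^ (k + 2)) := by
    simp only [texp, Finset.sum_range_succ', divPow, smul_sub, Finset.sum_sub_distrib]
    simp only [zero_add, Nat.factorial, pow_zero, pow_one, Nat.cast_one, inv_one, one_smul, mul_one]
    abel
  rw [e]
  exact Submodule.sum_mem _ fun k _ => Submodule.smul_mem _ _ (h2 k)

lemma coeffsIn_derivative {F E : Type*} [Field F] [Ring E] [Algebra F E] {g : Submodule F E}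
    {p : E[X]} (hp : p ∈ coeffsIn g) : derivative p ∈ coeffsIn g := by
  intro d
  rw [coeff_derivative, ← Nat.cast_succ, ← nsmul_eq_mul']
  exact nsmul_mem (hp _) _

/-- The differential equation satisfied by a product of two exponentials; the conjugate
`e^P c e^{-P}`, which appears in it, is handled by applying `logDeriv_texp` to the inner
derivation `p ↦ p * c - c * p`. -/
lemma logDeriv_mul {g : Submodule F E} (hg : ∀ x ∈ g, ∀ y ∈ g, x * y - y * x ∈ g) (N : ℕ)
    {P Q : E[X]} (hP : P ∈ ord F E 1) (hQ : Q ∈ ord F E 1) (hPg : P ∈ coeffsIn g)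
    (hQg : Q ∈ coeffsIn g) :
    ∃ c ∈ coeffsIn g, derivative (texp F (N + 1) P * texp F (N + 1) Q) -
      c * (texp F (N + 1) P * texp F (N + 1) Q) ∈ ord F E N := by
  obtain ⟨c₁, h₁, h₁'⟩ := logDeriv_texp hg (derivative.restrictScalars F)
    (fun p q => derivative_mul) (fun p hp => coeffsIn_derivative hp) N hP hPg
  obtain ⟨c₂, h₂, h₂'⟩ := logDeriv_texp hg (derivative.restrictScalars F)
    (fun p q => derivative_mul) (fun p hp => coeffsIn_derivative hp) N hQ hQg
  obtain ⟨c₃, h₃, h₃'⟩ := logDeriv_texp hg (-adj F c₂)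
    (fun p q => by simp only [LinearMap.neg_apply, adj_apply]; noncomm_ring)
    (fun p hp => Submodule.neg_mem _ (adj_coeffsIn hg h₂ hp)) N hP hPg
  refine ⟨c₁ + c₂ + c₃, Submodule.add_mem _ (Submodule.add_mem _ h₁ h₂) h₃, ?_⟩
  simp only [LinearMap.coe_restrictScalars, LinearMap.neg_apply, adj_apply] at h₁' h₂' h₃'
  have h := Submodule.add_mem _ (Submodule.add_mem _ (ord_mul_right (texp F (N + 1) Q) h₁')
    (ord_mul_left (texp F (N + 1) P) h₂')) (ord_mul_right (texp F (N + 1) Q) h₃')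
  convert h using 1
  rw [derivative_mul]
  noncomm_ring

/-- One step of the construction of the Baker-Campbell-Hausdorff series: a solution `Z` of
`e^Z = e^P e^Q` modulo `X ^ m` is corrected by the leading coefficient `r` of the error. Comparing
logarithmic derivatives shows that `m * r` is a coefficient of an element of `g[X]`, so that
`r ∈ g`. -/
lemma bch_step {g : Submodule F E} (hg : ∀ x ∈ g, ∀ y ∈ g, x * y - y * x ∈ g) {N m : ℕ}
    (hm : 1 ≤ m) (hmN : m ≤ N) {P Q Z : E[X]} (hP : P ∈ ord F E 1) (hQ : Q ∈ ord F E 1)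
    (hPg : P ∈ coeffsIn g) (hQg : Q ∈ coeffsIn g) (hPr : P ∈ rees g) (hQr : Q ∈ rees g)
    (hZ : Z ∈ ord F E 1) (hZg : Z ∈ coeffsIn g) (hZr : Z ∈ rees g)
    (h : texp F (N + 1) P * texp F (N + 1) Q - texp F (N + 1) Z ∈ ord F E m) :
    ∃ Z' ∈ ord F E 1, Z' ∈ coeffsIn g ∧ Z' ∈ rees g ∧
      texp F (N + 1) P * texp F (N + 1) Q - texp F (N + 1) Z' ∈ ord F E (m + 1) := by
  obtain ⟨c, hc, hc'⟩ := logDeriv_mul hg N hP hQ hPg hQg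
  obtain ⟨w, hw, hw'⟩ := logDeriv_texp hg (derivative.restrictScalars F)
    (fun p q => derivative_mul) (fun p hp => coeffsIn_derivative hp) N hZ hZg
  rw [LinearMap.coe_restrictScalars] at hw'
  have hUr := Subalgebra.mul_mem _ (texp_rees (F := F) hPr (N + 1)) (texp_rees (F := F) hQr (N + 1))
  have hVr := texp_rees (F := F) hZr (N + 1)
  have hV := texp_sub_one (F := F) hZ N
  set U := texp F (N + 1) P * texp F (N + 1) Q with hU
  set V := texp F (N + 1) Z with hVdef
  set r := (U - V).coeff m with hr
  -- modulo `X ^ m`, the derivative of the error is `(c - w) * V`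
  have hd : derivative (U - V) - (c - w) * V ∈ ord F E m := by
    have h1 := Submodule.add_mem _ (ord_mono hmN (Submodule.sub_mem _ hc' hw'))
      (ord_mul_left c h)
    convert h1 using 1
    rw [derivative_sub]
    noncomm_ring
  have hd0 : derivative (U - V) ∈ ord F E (m - 1) := by
    intro d hd
    rw [coeff_derivative, h _ (by omega), zero_mul]
  have hcw : c - w ∈ ord F E (m - 1) := by
    refine ord_of_mul hV ?_
    have h1 := Submodule.sub_mem _ hd0 (ord_mono (Nat.sub_le m 1) hd)
    rwa [sub_sub_cancel] at h1
  have hlead : (c - w).coeff (m - 1) = (m : E) * r := by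
    have h1 := ord_mul hcw hV
    rw [Nat.sub_add_cancel hm] at h1
    have h2 := Submodule.add_mem _ hd h1 (m - 1) (by omega)
    have h3 : derivative (U - V) - (c - w) * V + (c - w) * (V - 1)
        = derivative (U - V) - (c - w) := by noncomm_ring
    rw [h3, coeff_sub, sub_eq_zero, coeff_derivative, ← Nat.cast_succ, ← nsmul_eq_mul',
      Nat.succ_eq_add_one, Nat.sub_add_cancel hm, ← hr] at h2
    rw [← h2, nsmul_eq_mul]
  have hrg : r ∈ g := by
    have h1 : (m : F) ≠ 0 := by exact_mod_cast (by omega : m ≠ 0)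
    have h2 : (m : F)⁻¹ • (c - w).coeff (m - 1) = r := by
      rw [hlead, ← nsmul_eq_mul, ← Nat.cast_smul_eq_nsmul F, smul_smul, inv_mul_cancel₀ h1,
        one_smul]
    rw [← h2]
    exact g.smul_mem _ (Submodule.sub_mem _ hc hw _)
  have hrr : r ∈ g ^ m := Subalgebra.sub_mem _ hUr hVr m
  have hro : monomial m r ∈ ord F E m := fun d hd => coeff_monomial_of_ne _ (by omega)
  refine ⟨Z + monomial m r, Submodule.add_mem _ hZ (ord_mono hm hro), ?_, ?_, ?_⟩
  · refine Submodule.add_mem _ hZg fun d => ?_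
    rw [coeff_monomial]
    split_ifs
    · exact hrg
    · exact zero_mem _
  · refine Subalgebra.add_mem _ hZr fun d => ?_
    rw [coeff_monomial]
    split_ifs with hmd
    · rwa [← hmd]
    · exact zero_mem _
  · have h1 := texp_add hm (hm.trans hmN) hZ hro
    have h2 : U - V - monomial m r ∈ ord F E (m + 1) := by
      intro d hd
      rw [coeff_sub, coeff_monomial]
      split_ifs with hmd
      · rw [← hmd, hr, sub_self]
      · rw [h d (by omega), sub_zero]
    convert Submodule.sub_mem _ h2 h1 using 1
    abel

/-- The exponentials of a Lie subalgebra `g` of an associative algebra are closed under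
multiplication, provided that `g` is associatively nilpotent. -/
theorem exists_texp_mul {g : Submodule F E} (hg : ∀ x ∈ g, ∀ y ∈ g, x * y - y * x ∈ g) {n : ℕ}
    (hn : 0 < n) (hnil : g ^ n = ⊥) {x y : E} (hx : x ∈ g) (hy : y ∈ g) :
    ∃ z ∈ g, texp F n z = texp F n x * texp F n y := by
  obtain ⟨N, rfl⟩ : ∃ N, n = N + 1 := ⟨n - 1, by omega⟩
  have ho : ∀ a : E, monomial 1 a ∈ ord F E 1 := fun a d hd => coeff_monomial_of_ne _ (by omega)
  have hgm : ∀ a ∈ g, monomial 1 a ∈ coeffsIn g := by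
    intro a ha d
    rw [coeff_monomial]
    split_ifs
    · exact ha
    · exact zero_mem _
  have hrm : ∀ a ∈ g, monomial 1 a ∈ rees g := by
    intro a ha d
    rw [coeff_monomial]
    split_ifs with hd
    · rwa [← hd, pow_one]
    · exact zero_mem _
  have key : ∀ m ≤ N, ∃ Z ∈ ord F E 1, Z ∈ coeffsIn g ∧ Z ∈ rees g ∧
      texp F (N + 1) (monomial 1 x) * texp F (N + 1) (monomial 1 y) - texp F (N + 1) Z
        ∈ ord F E (m + 1) := by
    intro m
    induction m with
    | zero =>
      intro _
      refine ⟨0, zero_mem _, zero_mem _, zero_mem _, ?_⟩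
      have h1 := texp_sub_one (ho x) N
      have h2 := texp_sub_one (ho y) N
      have h3 := texp_sub_one (zero_mem (ord F E 1)) N
      convert Submodule.sub_mem _ (Submodule.add_mem _
        (ord_mul_right (texp F (N + 1) (monomial 1 y)) h1) h2) h3 using 1
      noncomm_ring
    | succ m ih =>
      intro hm
      obtain ⟨Z, hZ, hZg, hZr, h⟩ := ih (by omega)
      exact bch_step hg (by omega) hm (ho x) (ho y) (hgm x hx) (hgm y hy) (hrm x hx) (hrm y hy)
        hZ hZg hZr h
  obtain ⟨Z, -, hZg, hZr, h⟩ := key N le_rfl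
  -- all the remaining coefficients of the error lie in powers `g ^ d` with `n ≤ d`
  have hzero : texp F (N + 1) (monomial 1 x) * texp F (N + 1) (monomial 1 y)
      = texp F (N + 1) Z := by
    rw [← sub_eq_zero]
    ext d
    rw [coeff_zero]
    by_cases hd : d < N + 1
    · exact h d hd
    · have h1 := Subalgebra.sub_mem _ (Subalgebra.mul_mem _ (texp_rees (F := F) (hrm x hx) (N + 1))
        (texp_rees (F := F) (hrm y hy) (N + 1))) (texp_rees (F := F) hZr (N + 1)) d
      rw [← Nat.add_sub_cancel' (not_lt.1 hd), pow_add, hnil, Submodule.bot_mul] at h1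
      rw [← Nat.add_sub_cancel' (not_lt.1 hd)]
      exact (Submodule.mem_bot F).1 h1
  let ev : E[X] →+* E := eval₂RingHom' (RingHom.id E) 1 fun a => Commute.one_right a
  have ev_smul : ∀ (c : F) (p : E[X]), ev (c • p) = c • ev p := by
    intro c p
    rw [Algebra.smul_def, map_mul, Polynomial.algebraMap_apply, Algebra.smul_def]
    congr 1
    exact eval₂_C _ _
  have ev_texp : ∀ p : E[X], ev (texp F (N + 1) p) = texp F (N + 1) (ev p) := by
    intro p
    simp only [texp, divPow, map_sum, ev_smul, map_pow]
  have ev_mono : ∀ a : E, ev (monomial 1 a) = a := by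
    intro a
    change eval₂ (RingHom.id E) 1 (monomial 1 a) = a
    simp [eval₂_monomial]
  refine ⟨ev Z, ?_, ?_⟩
  · change eval₂ (RingHom.id E) 1 Z ∈ g
    rw [eval₂_eq_sum_range]
    exact Submodule.sum_mem _ fun d _ => by simpa using hZg d
  · rw [← ev_texp, ← hzero, map_mul, ev_texp, ev_texp, ev_mono, ev_mono]

end Polynomials

/-! ### Pre-Lie algebras acting on their right unitization -/

section PreLie

variable {F A : Type*} [Field F] [AddCommGroup A] [Module F A] (P : PreLieAlg F A)

/-- The representation of `A` on its right unitization `A × F`: the left multiplications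
`L_a`, extended to the adjoined element `1 = (0, 1)` by `L_a 1 = a`. -/
def rep : A →ₗ[F] Module.End F (A × F) where
  toFun a :=
    { toFun := fun v => (P.mul a v.1 + v.2 • a, 0)
      map_add' := by
        intro v w
        ext
        · simp only [Prod.fst_add, Prod.snd_add, P.mul_add, add_smul]
          abel
        · simp
      map_smul' := by
        intro c v
        ext
        · simp only [Prod.smul_fst, Prod.smul_snd, P.mul_smul, smul_add, smul_eq_mul, mul_smul,
            RingHom.id_apply]
        · simp }
  map_add' := by
    intro a b
    refine LinearMap.ext fun v => ?_
    ext
    · simp only [LinearMap.coe_mk, AddHom.coe_mk, LinearMap.add_apply, Prod.fst_add, P.add_mul,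
        smul_add]
      abel
    · simp
  map_smul' := by
    intro c a
    refine LinearMap.ext fun v => ?_
    ext
    · simp only [LinearMap.coe_mk, AddHom.coe_mk, LinearMap.smul_apply, Prod.smul_fst, P.smul_mul,
        smul_add, RingHom.id_apply, smul_comm c v.2 a]
    · simp

lemma rep_apply (a : A) (v : A × F) : rep P a v = (P.mul a v.1 + v.2 • a, 0) := rfl

lemma mul_zero' (a : A) : P.mul a 0 = 0 := by simpa using P.mul_smul 0 a 0

lemma zero_mul' (a : A) : P.mul 0 a = 0 := by simpa using P.smul_mul 0 0 a

lemma mul_sub' (a b c : A) : P.mul a (b - c) = P.mul a b - P.mul a c := by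
  rw [eq_sub_iff_add_eq, ← P.mul_add, sub_add_cancel]

lemma sub_mul' (a b c : A) : P.mul (a - b) c = P.mul a c - P.mul b c := by
  rw [eq_sub_iff_add_eq, ← P.add_mul, sub_add_cancel]

/-- The pre-Lie identity says exactly that `rep` is a Lie algebra representation. -/
lemma rep_bracket (a b : A) :
    rep P a * rep P b - rep P b * rep P a = rep P (P.mul a b - P.mul b a) := by
  refine LinearMap.ext fun v => ?_
  have h := P.pre_lie a b v.1
  rw [sub_eq_sub_iff_add_eq_add] at h
  have h' : P.mul a (P.mul b v.1) - P.mul b (P.mul a v.1)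
      = P.mul (P.mul a b) v.1 - P.mul (P.mul b a) v.1 := by
    rw [sub_eq_sub_iff_add_eq_add, ← sub_eq_zero]
    rw [← sub_eq_zero] at h
    rw [← neg_eq_zero, ← h]
    abel
  simp only [LinearMap.sub_apply, Module.End.mul_apply, rep_apply, Prod.mk_sub_mk, sub_zero,
    P.mul_add, P.mul_smul, zero_smul, add_zero, sub_mul', smul_sub, ← h']
  congr 1
  abel

lemma mul_mem_span (a : A) {k : ℕ} {x : A} (hx : x ∈ Submodule.span F {x | P.IsProd x k}) :
    P.mul a x ∈ Submodule.span F {x | P.IsProd x (k + 1)} := by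
  induction hx using Submodule.span_induction with
  | mem x hx =>
    rw [add_comm k]
    exact Submodule.subset_span (PreLieAlg.IsProd.node (PreLieAlg.IsProd.single (P := P) a) hx)
  | zero => rw [mul_zero']; exact zero_mem _
  | add x y _ _ hx hy => rw [P.mul_add]; exact Submodule.add_mem _ hx hy
  | smul c x _ hx => rw [P.mul_smul]; exact Submodule.smul_mem _ _ hx

/-- A product of `k + 1` operators `L_a` maps `A × F` into the span of the products of `k + 1`
elements of `A`. -/
lemma range_pow_apply (k : ℕ) : ∀ T ∈ (LinearMap.range (rep P)) ^ (k + 1), ∀ v : A × F,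
    T v ∈ (Submodule.span F {x | P.IsProd x (k + 1)}).map (LinearMap.inl F A F) := by
  induction k with
  | zero =>
    intro T hT v
    rw [zero_add, pow_one] at hT
    obtain ⟨a, rfl⟩ := hT
    exact ⟨_, Submodule.subset_span (PreLieAlg.IsProd.single _), rfl⟩
  | succ k ih =>
    intro T hT v
    rw [pow_succ'] at hT
    induction hT using Submodule.mul_induction_on' with
    | mem_mul_mem S hS T hT =>
      obtain ⟨a, rfl⟩ := hS
      obtain ⟨x, hx, hxv⟩ := ih T hT v
      rw [Module.End.mul_apply, ← hxv]
      exact ⟨P.mul a x, mul_mem_span P a hx, by simp [rep_apply]⟩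
    | add S _ T _ hS hT => exact Submodule.add_mem _ hS hT

variable {P} {n : ℕ}

lemma range_pow_eq_bot (hn : P.IsNilpotentOf n) : LinearMap.range (rep P) ^ n = ⊥ := by
  obtain ⟨k, rfl⟩ : ∃ k, n = k + 1 := ⟨n - 1, by have := hn.1; omega⟩
  rw [eq_bot_iff]
  intro T hT
  rw [Submodule.mem_bot]
  refine LinearMap.ext fun v => ?_
  obtain ⟨x, hx, hxv⟩ := range_pow_apply P k T hT v
  have h : Submodule.span F {x | P.IsProd x (k + 1)} = ⊥ := Submodule.span_eq_bot.2 hn.2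
  have hx0 : x = 0 := by simpa [h] using hx
  rw [← hxv, hx0, map_zero, LinearMap.zero_apply]

lemma rep_pow_eq_zero (hn : P.IsNilpotentOf n) (x : A) : rep P x ^ n = 0 := by
  rw [← Submodule.mem_bot F, ← range_pow_eq_bot hn]
  exact Submodule.pow_mem_pow _ (LinearMap.mem_range_self (rep P) x) n

variable (P) in
lemma rep_pow_apply_inl (x a : A) (k : ℕ) : (rep P x ^ k) (a, 0) = ((P.mul x)^[k] a, 0) := by
  induction k with
  | zero => rfl
  | succ k ih =>
    rw [pow_succ', Module.End.mul_apply, ih, Function.iterate_succ_apply', rep_apply]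
    simp

lemma texp_apply (k : ℕ) (T : Module.End F (A × F)) (v : A × F) :
    texp F k T v = ∑ i ∈ Finset.range k, ((Nat.factorial i : F))⁻¹ • (T ^ i) v := by
  simp [texp, divPow, LinearMap.sum_apply]

variable (P n) in
lemma texp_rep_inl (x a : A) : texp F n (rep P x) (a, 0) = (P.expL n x a, 0) := by
  rw [texp_apply]
  simp only [rep_pow_apply_inl]
  rw [PreLieAlg.expL, ← LinearMap.inl_apply (R := F), map_sum]
  exact Finset.sum_congr rfl fun k _ => by simp

/-- In the right unitization, `e^{L_x} 1 = 1 + W(x)`. -/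
lemma texp_rep_one (hn : P.IsNilpotentOf n) (x : A) :
    texp F n (rep P x) (0, 1) = (P.W n x, 1) := by
  have h : texp F n (rep P x) = texp F (n + 1) (rep P x) := by
    rw [texp, texp, Finset.sum_range_succ, divPow, rep_pow_eq_zero hn, smul_zero, add_zero]
  have h1 : ∀ k, (rep P x ^ (k + 1)) (0, 1) = ((P.mul x)^[k] x, 0) := by
    intro k
    rw [pow_succ, Module.End.mul_apply, ← rep_pow_apply_inl, rep_apply]
    simp [mul_zero']
  have h2 : (∑ k ∈ Finset.range n, ((Nat.factorial (k + 1) : F))⁻¹ • ((P.mul x)^[k] x, (0 : F)))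
      = (P.W n x, 0) := by
    rw [PreLieAlg.W, ← LinearMap.inl_apply (R := F), map_sum]
    exact Finset.sum_congr rfl fun k _ => by simp
  rw [h, texp_apply, Finset.sum_range_succ']
  simp only [h1, h2]
  simp

/-- `e^{L_x}` is surjective on `A`, since it differs from the identity by a nilpotent operator. -/
lemma expL_surjective (hn : P.IsNilpotentOf n) (x : A) : Function.Surjective (P.expL n x) := by
  intro b
  obtain ⟨k, rfl⟩ : ∃ k, n = k + 1 := ⟨n - 1, by have := hn.1; omega⟩
  have hnil : IsNilpotent (rep P x) := ⟨_, rep_pow_eq_zero hn x⟩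
  set S : Module.End F (A × F) :=
    ∑ i ∈ Finset.range k, ((Nat.factorial (i + 1) : F))⁻¹ • rep P x ^ i with hS
  have e : texp F (k + 1) (rep P x) = 1 + rep P x * S := by
    rw [texp, Finset.sum_range_succ', divPow_zero, add_comm, hS, Finset.mul_sum]
    simp only [divPow, pow_succ', mul_smul_comm]
  have hcomm : Commute (rep P x) S :=
    Commute.sum_right _ _ _ fun i _ => ((Commute.refl _).pow_right i).smul_right _
  have hu : IsUnit (texp F (k + 1) (rep P x)) := by
    rw [e]
    exact (hcomm.isNilpotent_mul_right hnil).isUnit_one_add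
  obtain ⟨v, hv⟩ := ((Module.End.isUnit_iff _).1 hu).2 (b, 0)
  -- the operator preserves the second coordinate, so the preimage lies in `A`
  have hv2 : v.2 = 0 := by
    have h1 := congrArg Prod.snd hv
    rw [e, LinearMap.add_apply, Module.End.mul_apply, rep_apply] at h1
    simpa using h1
  refine ⟨v.1, ?_⟩
  have h2 : v = (v.1, 0) := Prod.ext rfl hv2
  rw [h2, texp_rep_inl] at hv
  exact congrArg Prod.fst hv

/-- Since `e^{L_z} 1 = 1 + W(z)`, an element `z` with `e^{L_z} = e^{L_x} e^{L_y}` satisfies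
`W(z) = W(x) + e^{L_x}(W(y))`. -/
lemma exists_bch [CharZero F] (hn : P.IsNilpotentOf n) (x y : A) :
    ∃ z, P.W n z = P.W n x + P.expL n x (P.W n y) ∧
      ∀ c, P.expL n z c = P.expL n x (P.expL n y c) := by
  have hg : ∀ S ∈ LinearMap.range (rep P), ∀ T ∈ LinearMap.range (rep P),
      S * T - T * S ∈ LinearMap.range (rep P) := by
    rintro _ ⟨a, rfl⟩ _ ⟨b, rfl⟩
    exact ⟨_, (rep_bracket P a b).symm⟩
  obtain ⟨_, ⟨z, rfl⟩, hz⟩ := exists_texp_mul hg hn.1 (range_pow_eq_bot hn)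
    (LinearMap.mem_range_self (rep P) x) (LinearMap.mem_range_self (rep P) y)
  refine ⟨z, ?_, fun c => ?_⟩
  · have h := LinearMap.congr_fun hz (0, 1)
    have h1 : (P.W n y, (1 : F)) = (0, 1) + (P.W n y, 0) := by simp
    rw [Module.End.mul_apply, texp_rep_one hn, texp_rep_one hn, h1, map_add, texp_rep_one hn,
      texp_rep_inl] at h
    exact congrArg Prod.fst h
  · have h := LinearMap.congr_fun hz (c, 0)
    rw [Module.End.mul_apply, texp_rep_inl, texp_rep_inl, texp_rep_inl] at h
    exact congrArg Prod.fst h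

variable (P n) in
lemma expL_add (x a b : A) : P.expL n x (a + b) = P.expL n x a + P.expL n x b := by
  have h := map_add (texp F n (rep P x)) (a, 0) (b, 0)
  rw [Prod.mk_add_mk, add_zero, texp_rep_inl, texp_rep_inl, texp_rep_inl] at h
  exact congrArg Prod.fst h

variable (P n) in
lemma expL_zero_right (x : A) : P.expL n x 0 = 0 := by
  simpa using expL_add P n x 0 0

lemma expL_zero_left (hn : 0 < n) (a : A) : P.expL n 0 a = a := by
  obtain ⟨k, rfl⟩ : ∃ k, n = k + 1 := ⟨n - 1, by omega⟩
  rw [PreLieAlg.expL, Finset.sum_range_succ', Finset.sum_eq_zero]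
  · simp
  · intro i _
    rw [Function.iterate_succ_apply', zero_mul', smul_zero]

variable (P n) in
lemma W_zero : P.W n 0 = 0 := by
  refine Finset.sum_eq_zero fun k _ => ?_
  rw [Function.iterate_fixed (mul_zero' P 0), smul_zero]

end PreLie

end FlowGroup

theorem statement8 {F A : Type*} [Field F] [CharZero F] [AddCommGroup A] [Module F A]
    (P : PreLieAlg F A) (n : ℕ) (hn : P.IsNilpotentOf n)
    (Ω : A → A) (hΩ₁ : ∀ a, P.W n (Ω a) = a) (hΩ₂ : ∀ a, Ω (P.W n a) = a) :
    (∀ a b c : A, P.flow n Ω (P.flow n Ω a b) c = P.flow n Ω a (P.flow n Ω b c)) ∧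
    (∀ a : A, P.flow n Ω 0 a = a) ∧
    (∀ a : A, P.flow n Ω a 0 = a) ∧
    (∀ a : A, ∃ b : A, P.flow n Ω a b = 0 ∧ P.flow n Ω b a = 0) := by
  have assoc : ∀ a b c : A,
      P.flow n Ω (P.flow n Ω a b) c = P.flow n Ω a (P.flow n Ω b c) := by
    intro a b c
    obtain ⟨z, hz, hz'⟩ := FlowGroup.exists_bch hn (Ω a) (Ω b)
    rw [hΩ₁, hΩ₁] at hz
    have hΩz : Ω (a + P.expL n (Ω a) b) = z := by rw [← hz, hΩ₂]
    simp only [PreLieAlg.flow]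
    rw [hΩz, hz', FlowGroup.expL_add, add_assoc]
  have hΩ0 : Ω 0 = 0 := by
    have h := hΩ₂ 0
    rwa [FlowGroup.W_zero] at h
  have zero_flow : ∀ a : A, P.flow n Ω 0 a = a := by
    intro a
    rw [PreLieAlg.flow, hΩ0, FlowGroup.expL_zero_left hn.1, zero_add]
  have flow_zero : ∀ a : A, P.flow n Ω a 0 = a := by
    intro a
    rw [PreLieAlg.flow, FlowGroup.expL_zero_right, add_zero]
  have right_inv : ∀ a : A, ∃ b : A, P.flow n Ω a b = 0 := by
    intro a
    obtain ⟨b, hb⟩ := FlowGroup.expL_surjective hn (Ω a) (-a)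
    exact ⟨b, by rw [PreLieAlg.flow, hb, add_neg_cancel]⟩
  refine ⟨assoc, zero_flow, flow_zero, fun a => ?_⟩
  -- in a monoid, a right inverse that itself has a right inverse is two-sided
  obtain ⟨b, hb⟩ := right_inv a
  obtain ⟨c, hc⟩ := right_inv b
  have hca : c = a := by
    rw [← zero_flow c, ← hb, assoc, hc, flow_zero]
  exact ⟨b, hb, hca ▸ hc⟩
end
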